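/- (Sparse certificate for k-edge-connectivity.) Let V be a finite vertex type, G a simple graph on V, and k a positive natural number. Let F₁, …, F_k be subgraphs of G such that for each i, F_i is a maximal spanning forest of the residual graph R_i := G with the edges of F₁, …, F_{i−1} removed; that is, F_i ≤ R_i, F_i is acyclic, and F_i has the same reachability relation as R_i (two vertices are connected in F_i iff they are connected in R_i). Then for all vertices u and v: there exist k pairwise edge-disjoint paths from u to v in G if and only if there exist k pairwise edge-disjoint paths from u to v in the union F₁ ∪ F₂ ∪ ⋯ ∪ F_k. -/

import Mathlib

/-- `kEdgeDisjointPaths H k u v` means there exist `k` pairwise edge-disjoint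
paths from `u` to `v` in `H`. -/
def kEdgeDisjointPaths {V : Type*} (H : SimpleGraph V) (k : ℕ) (u v : V) : Prop :=
  ∃ P : Fin k → H.Walk u v,
    (∀ i, (P i).IsPath) ∧
    ∀ i j, i ≠ j → ∀ e ∈ (P i).edges, e ∉ (P j).edges

/-!
By Menger's theorem, `u` and `v` are joined by `k` edge-disjoint paths iff no set `s` of fewer than
`k` edges separates them. Such an `s` misses one of the `k` disjoint forests entirely, say `F i`. An
edge of `G` outside the union of the forests survives in every residual graph, so its ends are
joined within `F i`; hence deleting `s` from the union separates no more than deleting it from `G`.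

Menger's theorem is proved by augmenting paths: a flow of value `m` that cannot be augmented
saturates a cut with exactly `m` edges. Since flows are finitely supported, the graph may be
infinite.
-/

section

open SimpleGraph
open scoped Finset

variable {V : Type*} {G : SimpleGraph V} {u v : V} {k m n : ℕ}

theorem exists_disjoint_of_encard_lt {ι α : Type*} {f : ι → Set α} {s : Set α}
    (hf : Pairwise fun i j ↦ Disjoint (f i) (f j)) (hs : s.encard < ENat.card ι) :
    ∃ i, Disjoint (f i) s := by
  by_contra! hmeet
  choose g hgf hgs using fun i ↦ Set.not_disjoint_iff.1 (hmeet i)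
  have hg : g.Injective := fun i j hij ↦ by
    by_contra hne
    exact (hf hne).ne_of_mem (hgf i) (hgf j) hij
  refine hs.not_ge ?_
  rw [← Set.encard_univ, ← hg.encard_image]
  exact Set.encard_le_encard (Set.image_subset_iff.2 fun i _ ↦ hgs i)

theorem exists_isPath_of_forall_exists_boundary_dart {D : Set G.Dart}
    (hD : ∀ S : Set V, u ∈ S → v ∉ S → ∃ d ∈ D, d.fst ∈ S ∧ d.snd ∉ S) :
    ∃ p : G.Walk u v, p.IsPath ∧ ∀ d ∈ p.darts, d ∈ D := by
  classical
  suffices hv : v ∈ {x | ∃ p : G.Walk u x, ∀ d ∈ p.darts, d ∈ D} by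
    obtain ⟨p, hp⟩ := hv
    exact ⟨p.bypass, p.bypass_isPath, fun d hd ↦ hp d (p.darts_bypass_subset_darts hd)⟩
  by_contra hv
  have hu : u ∈ {x | ∃ p : G.Walk u x, ∀ d ∈ p.darts, d ∈ D} := ⟨.nil, by simp⟩
  obtain ⟨d, hdD, ⟨p, hp⟩, hd⟩ := hD _ hu hv
  refine hd ⟨p.concat d.adj, fun e he ↦ ?_⟩
  rw [Walk.darts_concat, List.concat_eq_append, List.mem_append, List.mem_singleton] at he
  exact he.elim (hp e) fun h ↦ h ▸ hdD

theorem sum_darts_sub {M : Type*} [AddCommGroup M] (p : G.Walk u v) (φ : V → M) :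
    (p.darts.map fun d ↦ φ d.fst - φ d.snd).sum = φ u - φ v := by
  induction p with
  | nil => simp
  | cons h p ih => simp [ih]

/-- Integral unit-capacity flows of value `m` from `u` to `v`, used to prove Menger's theorem. The
flow is encoded by the finite set `A` of darts that carry a unit, and the law of conservation by
pairing the flow with an arbitrary potential `φ`: the indicator function of a vertex gives the net
flow out of that vertex, the indicator function of a set the net flow across a cut. -/
structure IsUnitFlow (A : Finset G.Dart) (u v : V) (m : ℕ) : Prop where
  symm_notMem : ∀ d ∈ A, d.symm ∉ A
  sum_sub : ∀ φ : V → ℤ, ∑ d ∈ A, (φ d.fst - φ d.snd) = m * (φ u - φ v)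

namespace IsUnitFlow

variable {A B : Finset G.Dart}

theorem empty : IsUnitFlow (∅ : Finset G.Dart) u v 0 := ⟨by simp, by simp⟩

theorem of_isTrail [DecidableEq V] {p : G.Walk u v} (hp : p.IsTrail) :
    IsUnitFlow p.darts.toFinset u v 1 where
  symm_notMem d hd hd' := by
    rw [List.mem_toFinset] at hd hd'
    exact d.symm_ne (List.inj_on_of_nodup_map hp.edges_nodup hd' hd d.edge_symm)
  sum_sub φ := by
    rw [List.sum_toFinset _ hp.edges_nodup.of_map, sum_darts_sub, Nat.cast_one, one_mul]

theorem exists_add (hA : IsUnitFlow A u v m) (hB : IsUnitFlow B u v n) (hAB : Disjoint A B) :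
    ∃ C : Finset G.Dart, IsUnitFlow C u v (m + n) := by
  classical
  refine ⟨{d ∈ A | d.symm ∉ B} ∪ {d ∈ B | d.symm ∉ A}, fun d hd hd' ↦ ?_, fun φ ↦ ?_⟩
  · have := hA.symm_notMem d
    have := hB.symm_notMem d
    simp only [Finset.mem_union, Finset.mem_filter, Dart.symm_symm] at hd hd'
    tauto
  have hcancel : ∑ d ∈ A with d.symm ∈ B, (φ d.fst - φ d.snd) =
      -∑ d ∈ B with d.symm ∈ A, (φ d.fst - φ d.snd) := by
    rw [← Finset.sum_neg_distrib]
    refine Finset.sum_nbij' Dart.symm Dart.symm ?_ ?_ ?_ ?_ ?_ <;> simp +contextual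
  have hsumA := Finset.sum_filter_add_sum_filter_not A (·.symm ∈ B) fun d ↦ φ d.fst - φ d.snd
  have hsumB := Finset.sum_filter_add_sum_filter_not B (·.symm ∈ A) fun d ↦ φ d.fst - φ d.snd
  rw [hA.sum_sub] at hsumA
  rw [hB.sum_sub] at hsumB
  rw [Finset.sum_union (Finset.disjoint_filter_filter hAB)]
  push_cast
  linarith

theorem sdiff [DecidableEq V] (hA : IsUnitFlow A u v (m + n)) (hB : IsUnitFlow B u v n)
    (hBA : B ⊆ A) : IsUnitFlow (A \ B) u v m where
  symm_notMem d hd hd' :=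
    hA.symm_notMem d (Finset.sdiff_subset hd) (Finset.sdiff_subset hd')
  sum_sub φ := by
    rw [Finset.sum_sdiff_eq_sub hBA, hA.sum_sub, hB.sum_sub]
    push_cast
    ring

open Classical in
theorem card_leaving_eq (hA : IsUnitFlow A u v m) {S : Set V} (hu : u ∈ S) (hv : v ∉ S) :
    #{d ∈ A | d.fst ∈ S ∧ d.snd ∉ S} = m + #{d ∈ A | d.snd ∈ S ∧ d.fst ∉ S} := by
  have hindicator (d : G.Dart) : (S.indicator 1 d.fst - S.indicator 1 d.snd : ℤ) =
      (if d.fst ∈ S ∧ d.snd ∉ S then 1 else 0) - if d.snd ∈ S ∧ d.fst ∉ S then 1 else 0 := by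
    by_cases hfst : d.fst ∈ S <;> by_cases hsnd : d.snd ∈ S <;> simp [hfst, hsnd]
  have hcut := hA.sum_sub (S.indicator 1)
  simp only [hindicator, Finset.sum_sub_distrib, Finset.sum_boole, Set.indicator_of_mem hu,
    Set.indicator_of_notMem hv, Pi.one_apply, sub_zero, mul_one] at hcut
  lia

theorem exists_leaving_notMem (hA : IsUnitFlow A u v m) (hG : G.IsEdgeReachable (m + 1) u v)
    {S : Set V} (hu : u ∈ S) (hv : v ∉ S) : ∃ d ∉ A, d.fst ∈ S ∧ d.snd ∉ S := by
  classical
  by_contra! hsat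
  have hentering : {d ∈ A | d.snd ∈ S ∧ d.fst ∉ S} = (∅ : Finset G.Dart) := by
    refine Finset.filter_false_of_mem fun d hd hdS ↦ hdS.2 ?_
    exact hsat d.symm (hA.symm_notMem d hd) hdS.1
  have hleaving : #{d ∈ A | d.fst ∈ S ∧ d.snd ∉ S} = m := by
    rw [hA.card_leaving_eq hu hv, hentering, Finset.card_empty, add_zero]
  let s : Finset (Sym2 V) := {d ∈ A | d.fst ∈ S ∧ d.snd ∉ S}.image Dart.edge
  have hs : (s : Set (Sym2 V)).encard < (m + 1 : ℕ) := by
    rw [Set.encard_coe_eq_coe_finsetCard, Nat.cast_lt, Nat.lt_succ_iff, ← hleaving]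
    exact Finset.card_image_le
  obtain ⟨p⟩ := hG hs
  obtain ⟨d, -, hfst, hsnd⟩ := p.exists_boundary_dart S hu hv
  obtain ⟨hadj, hds⟩ := deleteEdges_adj.1 d.adj
  let e : G.Dart := ⟨d.toProd, hadj⟩
  have heA : e ∈ A := by_contra fun he ↦ hsnd (hsat e he hfst)
  exact hds (Finset.mem_image.2 ⟨e, Finset.mem_filter.2 ⟨heA, hfst, hsnd⟩, rfl⟩)

theorem exists_of_isEdgeReachable (hG : G.IsEdgeReachable k u v) :
    ∃ A : Finset G.Dart, IsUnitFlow A u v k := by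
  classical
  induction k with
  | zero => exact ⟨∅, empty⟩
  | succ m ih =>
    obtain ⟨A, hA⟩ := ih (hG.anti m.le_succ)
    -- A dart outside `A` has residual capacity even if its reversal lies in `A`: the two cancel.
    obtain ⟨p, hp, hpA⟩ := exists_isPath_of_forall_exists_boundary_dart
      (D := {d | d ∉ A}) fun S hu hv ↦ hA.exists_leaving_notMem hG hu hv
    refine hA.exists_add (of_isTrail hp.isTrail) (Finset.disjoint_left.2 fun d hdA hdp ↦ ?_)
    exact hpA d (List.mem_toFinset.1 hdp) hdA

theorem exists_isPath_darts_mem (hA : IsUnitFlow A u v (m + 1)) :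
    ∃ p : G.Walk u v, p.IsPath ∧ ∀ d ∈ p.darts, d ∈ A := by
  classical
  refine exists_isPath_of_forall_exists_boundary_dart (D := (A : Set G.Dart)) fun S hu hv ↦ ?_
  have hpos : 0 < #{d ∈ A | d.fst ∈ S ∧ d.snd ∉ S} := by
    rw [hA.card_leaving_eq hu hv]
    lia
  obtain ⟨d, hd⟩ := Finset.card_pos.1 hpos
  exact ⟨d, Finset.mem_filter.1 hd⟩

theorem exists_isPath_darts_disjoint (hA : IsUnitFlow A u v k) :
    ∃ P : Fin k → G.Walk u v, (∀ i, (P i).IsPath) ∧ (∀ i, ∀ d ∈ (P i).darts, d ∈ A) ∧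
      Pairwise fun i j ↦ (P i).darts.Disjoint (P j).darts := by
  classical
  induction k generalizing A with
  | zero => exact ⟨Fin.elim0, by simp, by simp, fun i ↦ i.elim0⟩
  | succ m ih =>
    obtain ⟨p, hp, hpA⟩ := hA.exists_isPath_darts_mem
    obtain ⟨P, hP, hPA, hPP⟩ := ih <| hA.sdiff (of_isTrail hp.isTrail) fun d hd ↦
      hpA d (List.mem_toFinset.1 hd)
    simp only [Finset.mem_sdiff, List.mem_toFinset] at hPA
    have hpP (i : Fin m) : p.darts.Disjoint (P i).darts := fun d hdp hdP ↦ (hPA i d hdP).2 hdp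
    refine ⟨Fin.cons p P, Fin.cases hp hP, Fin.cases hpA fun i d hd ↦ (hPA i d hd).1, ?_⟩
    intro i j hij
    cases i using Fin.cases <;> cases j using Fin.cases
    · exact absurd rfl hij
    · exact hpP _
    · exact (hpP _).symm
    · exact hPP (ne_of_apply_ne Fin.succ hij)

protected theorem kEdgeDisjointPaths (hA : IsUnitFlow A u v k) : kEdgeDisjointPaths G k u v := by
  obtain ⟨P, hP, hPA, hPP⟩ := hA.exists_isPath_darts_disjoint
  refine ⟨P, hP, fun i j hij e hei hej ↦ ?_⟩
  obtain ⟨d, hd, rfl⟩ := List.mem_map.1 hei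
  obtain ⟨d', hd', hdd'⟩ := List.mem_map.1 hej
  rcases dart_edge_eq_iff d' d |>.1 hdd' with rfl | rfl
  · exact hPP hij hd hd'
  · exact hA.symm_notMem d (hPA i d hd) (hPA j _ hd')

end IsUnitFlow

theorem kEdgeDisjointPaths.isEdgeReachable (h : kEdgeDisjointPaths G k u v) :
    G.IsEdgeReachable k u v := by
  obtain ⟨P, -, hPP⟩ := h
  intro s hs
  obtain ⟨i, hi⟩ := exists_disjoint_of_encard_lt (f := fun i ↦ (P i).edgeSet)
    (fun i j hij ↦ Set.disjoint_left.2 (hPP i j hij)) (by simpa using hs)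
  exact ((P i).toDeleteEdges s fun e he ↦ Set.disjoint_left.1 hi he).reachable

theorem kEdgeDisjointPaths_iff_isEdgeReachable :
    kEdgeDisjointPaths G k u v ↔ G.IsEdgeReachable k u v := by
  refine ⟨kEdgeDisjointPaths.isEdgeReachable, fun h ↦ ?_⟩
  obtain ⟨A, hA⟩ := IsUnitFlow.exists_of_isEdgeReachable h
  exact hA.kEdgeDisjointPaths

theorem reachable_of_forall_adj_reachable {H : SimpleGraph V}
    (hH : ∀ x y, G.Adj x y → H.Reachable x y) (hG : G.Reachable u v) : H.Reachable u v := by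
  obtain ⟨p⟩ := hG
  induction p with
  | nil => rfl
  | cons h _ ih => exact (hH _ _ h).trans ih

theorem isEdgeReachable_iSup_of_pairwise_disjoint {F : Fin k → SimpleGraph V}
    (hF : Pairwise fun i j ↦ Disjoint (F i) (F j))
    (hspan : ∀ x y, G.Adj x y → ¬ (⨆ i, F i).Adj x y → ∀ i, (F i).Reachable x y)
    (hG : G.IsEdgeReachable k u v) : (⨆ i, F i).IsEdgeReachable k u v := by
  intro s hs
  obtain ⟨i, hi⟩ := exists_disjoint_of_encard_lt (f := fun i ↦ (F i).edgeSet)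
    (fun i j hij ↦ disjoint_edgeSet.2 (hF hij)) (by simpa using hs)
  have hFi : F i ≤ (⨆ i, F i).deleteEdges s := fun x y hxy ↦
    deleteEdges_adj.2 ⟨le_iSup F i hxy, Set.disjoint_left.1 hi hxy⟩
  refine reachable_of_forall_adj_reachable (fun x y hxy ↦ ?_) (hG hs)
  obtain ⟨hxy, hxys⟩ := deleteEdges_adj.1 hxy
  by_cases hmem : (⨆ i, F i).Adj x y
  · exact (deleteEdges_adj.2 ⟨hmem, hxys⟩).reachable
  · exact (hspan x y hxy hmem i).mono hFi

theorem k_certificate_general (G : SimpleGraph V) (F : Fin k → SimpleGraph V)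
    (hsub : ∀ i : Fin k, F i ≤ G.deleteEdges (⋃ j < i, (F j).edgeSet))
    (hmaximal : ∀ i : Fin k, ∀ u v : V,
      (G.deleteEdges (⋃ j < i, (F j).edgeSet)).Reachable u v → (F i).Reachable u v) (u v : V) :
    kEdgeDisjointPaths G k u v ↔ kEdgeDisjointPaths (⨆ i, F i) k u v := by
  have hle : ⨆ i, F i ≤ G := iSup_le fun i ↦ (hsub i).trans (deleteEdges_le _)
  have hlt {i j : Fin k} (hij : i < j) : Disjoint (F i) (F j) := by
    refine disjoint_edgeSet.1 (Set.disjoint_left.2 fun e hi hj ↦ ?_)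
    have hres := edgeSet_mono (hsub j) hj
    rw [edgeSet_deleteEdges] at hres
    exact hres.2 (Set.mem_iUnion₂.2 ⟨i, hij, hi⟩)
  have hdisj : Pairwise fun i j ↦ Disjoint (F i) (F j) := fun i j hij ↦
    hij.lt_or_gt.elim hlt fun hji ↦ (hlt hji).symm
  have hspan (x y : V) (hxy : G.Adj x y) (hnot : ¬ (⨆ i, F i).Adj x y) (i : Fin k) :
      (F i).Reachable x y := by
    refine hmaximal i x y (deleteEdges_adj.2 ⟨hxy, fun hmem ↦ hnot ?_⟩).reachable
    obtain ⟨j, -, hj⟩ := Set.mem_iUnion₂.1 hmem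
    exact le_iSup F j hj
  rw [kEdgeDisjointPaths_iff_isEdgeReachable, kEdgeDisjointPaths_iff_isEdgeReachable]
  exact ⟨isEdgeReachable_iSup_of_pairwise_disjoint hdisj hspan, .mono hle⟩

end

/-- Sparse certificate for `k`-edge-connectivity: if each `F i` is a maximal
spanning forest of `G` minus the edges of the previous forests, then two
vertices are joined by `k` pairwise edge-disjoint paths in `G` iff they are
joined by `k` pairwise edge-disjoint paths in the union `F₁ ∪ ⋯ ∪ F_k`. -/
theorem k_certificate {V : Type*} [Fintype V] (G : SimpleGraph V)
    (k : ℕ) (hk : 0 < k) (F : Fin k → SimpleGraph V)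
    (hsub : ∀ i : Fin k, F i ≤ G.deleteEdges (⋃ j < i, (F j).edgeSet))
    (hacyc : ∀ i : Fin k, (F i).IsAcyclic)
    (hmaximal : ∀ i : Fin k, ∀ u v : V,
      (F i).Reachable u v ↔ (G.deleteEdges (⋃ j < i, (F j).edgeSet)).Reachable u v) :
    ∀ u v : V, kEdgeDisjointPaths G k u v ↔ kEdgeDisjointPaths (⨆ i, F i) k u v :=
  k_certificate_general G F hsub fun i u v ↦ (hmaximal i u v).2
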